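/- Let r ≥ 3 be an odd integer and let k be an integer with 1 ≤ k ≤ 2r/3. Then every r-regular graph has a [k−1, k]-factor each of whose connected components is a regular graph. -/

import Mathlib

open Finset SimpleGraph

section Generic
set_option linter.unusedSectionVars false
open scoped Classical

def HasPM {W : Type*} (Γ : SimpleGraph W) (X : Finset W) : Prop :=
  ∃ m : W → W, ∀ x ∈ X, m x ∈ X ∧ Γ.Adj x (m x) ∧ m (m x) = x

structure Bar {W : Type*} (Γ : SimpleGraph W) (X S : Finset W)
    (K : Finset (Finset W)) : Prop where
  sS : S ⊆ X
  sub : ∀ A ∈ K, A ⊆ X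
  dS : ∀ A ∈ K, ∀ x ∈ A, x ∉ S
  odd : ∀ A ∈ K, Odd A.card
  cl : ∀ A ∈ K, ∀ x ∈ A, ∀ y ∈ X, Γ.Adj x y → y ∈ A ∨ y ∈ S
  dj : ∀ A ∈ K, ∀ B ∈ K, ∀ x ∈ A, x ∈ B → A = B

variable {W : Type*} [Fintype W] [DecidableEq W] (Γ : SimpleGraph W)

lemma tutteFam (X : Finset W)
    (h : ∀ S K, Bar Γ X S K → K.card ≤ S.card) : HasPM Γ X := by
  set H : SimpleGraph {x // x ∈ X} := Γ.comap Subtype.val with hH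
  have key : ∃ M : Subgraph H, M.IsPerfectMatching := by
    rw [SimpleGraph.tutte]
    intro u hu
    unfold IsTutteViolator at hu
    set D := ((⊤ : H.Subgraph).deleteVerts u) with hD
    let f : D.coe.ConnectedComponent → Finset W :=
      fun c => c.supp.toFinset.map ⟨fun x => x.1.1, fun a b hab => Subtype.ext (Subtype.ext hab)⟩
    have hmem : ∀ c w, w ∈ f c ↔ ∃ x : D.verts, D.coe.connectedComponentMk x = c ∧ x.1.1 = w := by
      intro c w
      simp only [f, Finset.mem_map, Set.mem_toFinset, ConnectedComponent.mem_supp_iff]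
      rfl
    have hfinj : ∀ c c' w, w ∈ f c → w ∈ f c' → c = c' := by
      intro c c' w h1 h2
      obtain ⟨x, hx, hxw⟩ := (hmem _ _).1 h1
      obtain ⟨y, hy, hyw⟩ := (hmem _ _).1 h2
      have : x = y := Subtype.ext (Subtype.ext (hxw.trans hyw.symm))
      rw [← hx, ← hy, this]
    have hcard : ∀ c, (f c).card = c.supp.ncard := by
      intro c
      rw [Set.ncard_eq_toFinset_card']
      simp [f]
    have hne : ∀ c, ∃ w, w ∈ f c := by
      intro c
      obtain ⟨x, hx⟩ := c.nonempty_supp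
      exact ⟨x.1.1, (hmem _ _).2 ⟨x, hx, rfl⟩⟩
    have := h (u.toFinset.map (Function.Embedding.subtype _))
      ((D.coe.oddComponents.toFinset).image f) ?_
    · rw [Finset.card_image_of_injective, Finset.card_map, ← Set.ncard_eq_toFinset_card',
        ← Set.ncard_eq_toFinset_card'] at this
      · omega
      · intro c c' hcc
        obtain ⟨w, hw⟩ := hne c
        exact hfinj _ _ w hw (hcc ▸ hw)
    · constructor
      · intro x hx
        simp at hx
        exact hx.1
      · intro A hA
        simp only [Finset.mem_image] at hA
        obtain ⟨c, hc, rfl⟩ := hA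
        intro w hw
        obtain ⟨x, hx, rfl⟩ := (hmem _ _).1 hw
        exact x.1.2
      · intro A hA
        simp only [Finset.mem_image] at hA
        obtain ⟨c, hc, rfl⟩ := hA
        intro w hw
        obtain ⟨x, hx, rfl⟩ := (hmem _ _).1 hw
        have := x.2
        simp [hD] at this
        simp [this]
      · intro A hA
        simp only [Finset.mem_image] at hA
        obtain ⟨c, hc, rfl⟩ := hA
        rw [hcard]
        simpa using hc
      · intro A hA
        simp only [Finset.mem_image] at hA
        obtain ⟨c, hc, rfl⟩ := hA
        intro w hw y hy hadj
        obtain ⟨x, hx, rfl⟩ := (hmem _ _).1 hw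
        by_cases hyu : (⟨y, hy⟩ : {x // x ∈ X}) ∈ u
        · right
          simp [hy, hyu]
        · left
          have hyv : (⟨y, hy⟩ : {x // x ∈ X}) ∈ D.verts := by simp [hD, hyu]
          refine (hmem _ _).2 ⟨⟨⟨y, hy⟩, hyv⟩, ?_, rfl⟩
          rw [← hx, ConnectedComponent.eq]
          apply Adj.reachable
          have h1 := x.2
          simp [hD] at h1
          simp [hD, h1, hyu, hH]
          exact hadj.symm
      · intro A hA B hB w hwA hwB
        simp only [Finset.mem_image] at hA hB
        obtain ⟨c, hc, rfl⟩ := hA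
        obtain ⟨c', hc', rfl⟩ := hB
        rw [hfinj _ _ w hwA hwB]
  obtain ⟨M, hM⟩ := key
  rw [Subgraph.isPerfectMatching_iff] at hM
  choose g hg hg2 using hM
  refine ⟨fun w => if hw : w ∈ X then (g ⟨w, hw⟩).1 else w, fun x hx => ?_⟩
  have h1 := hg ⟨x, hx⟩
  simp only [hx, dite_true, (g ⟨x, hx⟩).2, true_and]
  refine ⟨h1.adj_sub, ?_⟩
  have := hg2 (g ⟨x, hx⟩) ⟨x, hx⟩ h1.symm
  simp only [Subtype.coe_eta]
  rw [← this]

variable {Γ}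

/-- the remainder -/
lemma Bar.rest {X S : Finset W} {K : Finset (Finset W)} (h : Bar Γ X S K)
    (hodd : Odd (X.card + S.card + K.card)) :
    ∃ R, Odd R.card ∧ R ∉ K ∧ Bar Γ X S (insert R K) := by
  set R := (X \ S) \ K.biUnion id with hR
  have hdisj : ∀ A ∈ K, ∀ x ∈ A, x ∉ R := by
    intro A hA x hx hxR
    simp only [hR, mem_sdiff, mem_biUnion, id] at hxR
    exact hxR.2 ⟨A, hA, hx⟩
  have hcard : X.card = R.card + (K.biUnion id).card + S.card := by
    have h1 : K.biUnion id ⊆ X \ S := by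
      intro x hx
      simp only [mem_biUnion, id] at hx
      obtain ⟨A, hA, hx⟩ := hx
      exact mem_sdiff.2 ⟨h.sub A hA hx, h.dS A hA x hx⟩
    have : R.card + _ = _ := card_sdiff_add_card_eq_card h1
    have := card_sdiff_add_card_eq_card h.sS
    omega
  have hK : Odd (K.biUnion id).card ↔ Odd K.card := by
    rw [card_biUnion]
    · simp only [id]
      rw [Finset.odd_sum_iff_odd_card_odd, filter_true_of_mem]
      exact h.odd
    · intro A hA B hB hne
      rw [Function.onFun, Finset.disjoint_left]
      intro x hx hx'
      exact hne (h.dj A hA B hB x hx hx')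
  have hRo : Odd R.card := by
    rw [hcard] at hodd
    grind
  have hRK : R ∉ K := by
    intro hRK
    obtain ⟨x, hx⟩ := Finset.card_pos.1 hRo.pos
    exact hdisj R hRK x hx hx
  refine ⟨R, hRo, hRK, ⟨h.sS, ?_, ?_, ?_, ?_, ?_⟩⟩
  · intro A hA
    rcases mem_insert.1 hA with rfl | hA
    · exact sdiff_subset.trans sdiff_subset
    · exact h.sub A hA
  · intro A hA
    rcases mem_insert.1 hA with rfl | hA
    · intro x hx
      simp only [hR, mem_sdiff] at hx
      exact hx.1.2
    · exact h.dS A hA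
  · intro A hA
    rcases mem_insert.1 hA with rfl | hA
    · exact hRo
    · exact h.odd A hA
  · intro A hA
    rcases mem_insert.1 hA with rfl | hA
    · intro x hx y hy hxy
      by_contra hcon
      push Not at hcon
      have hyR := hcon.1
      simp only [hR, mem_sdiff, hy, hcon.2, mem_biUnion, id] at hyR
      simp only [not_false_eq_true, and_self, true_and, not_not] at hyR
      obtain ⟨B, hB, hyB⟩ := hyR
      have hxX : x ∈ X := by
        simp only [hR, mem_sdiff] at hx; exact hx.1.1
      rcases h.cl B hB y hyB x hxX hxy.symm with h1 | h1
      · exact hdisj B hB x h1 hx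
      · simp only [hR, mem_sdiff] at hx; exact hx.1.2 h1
    · exact h.cl A hA
  · intro A hA B hB x hxA hxB
    rcases mem_insert.1 hA with rfl | hA <;> rcases mem_insert.1 hB with rfl | hB
    · rfl
    · exact absurd hxA (hdisj B hB x hxB)
    · exact absurd hxB (hdisj A hA x hxA)
    · exact h.dj A hA B hB x hxA hxB

lemma tutteFam' (X : Finset W) (hX : Even X.card)
    (h : ∀ S K, Bar Γ X S K → K.card < S.card + 2) : HasPM Γ X := by
  apply tutteFam
  intro S K hb
  by_contra hlt
  have h1 := h S K hb
  obtain ⟨R, -, hRK, hb'⟩ := hb.rest (by grind)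
  have := h S _ hb'
  rw [card_insert_of_notMem hRK] at this
  omega

lemma HasPM.union {X Y : Finset W} (hX : HasPM Γ X) (hY : HasPM Γ Y) (h : Disjoint X Y) :
    HasPM Γ (X ∪ Y) := by
  obtain ⟨m, hm⟩ := hX
  obtain ⟨n, hn⟩ := hY
  refine ⟨fun x => if x ∈ X then m x else n x, fun x hx => ?_⟩
  by_cases hxX : x ∈ X
  · have := hm x hxX
    simp [hxX, this]
  · have hxY : x ∈ Y := by simpa [hxX] using hx
    have := hn x hxY
    have h2 : n x ∉ X := fun h' => Finset.disjoint_left.1 h h' this.1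
    simp [hxX, this, h2]

lemma HasPM.biUnion {ι : Type*} (I : Finset ι) (f : ι → Finset W)
    (hf : ∀ i ∈ I, HasPM Γ (f i))
    (hd : ∀ i ∈ I, ∀ j ∈ I, ∀ x ∈ f i, x ∈ f j → i = j) : HasPM Γ (I.biUnion f) := by
  induction I using Finset.induction_on with
  | empty => exact ⟨id, by simp⟩
  | insert a I ha ih =>
    rw [Finset.biUnion_insert]
    apply HasPM.union (hf a (by simp))
      (ih (fun i hi => hf i (by simp [hi])) (fun i hi j hj => hd i (by simp [hi]) j (by simp [hj])))
    rw [Finset.disjoint_left]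
    intro x hx hx'
    obtain ⟨j, hj, hxj⟩ := Finset.mem_biUnion.1 hx'
    have := hd a (by simp) j (by simp [hj]) x hx hxj
    subst this
    exact ha hj

lemma HasPM.pair {x y : W} (h : Γ.Adj x y) : HasPM Γ {x, y} := by
  refine ⟨fun z => if z = x then y else x, fun z hz => ?_⟩
  have := h.ne
  rcases (by simpa using hz : z = x ∨ z = y) with rfl | rfl
  · simp [h, this.symm]
  · simp [h.symm, this.symm]

lemma Bar.glue {X Y S0 S' : Finset W} {K0 K' : Finset (Finset W)} (h0 : Bar Γ X S0 K0)
    (h' : Bar Γ Y S' K') (hYX : Y ⊆ X) (hYS : ∀ y ∈ Y, y ∉ S0)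
    (hYK : ∀ A ∈ K0, ∀ x ∈ A, x ∉ Y)
    (hcl : ∀ x ∈ Y, ∀ y ∈ X, Γ.Adj x y → y ∈ Y ∨ y ∈ S0) :
    Bar Γ X (S0 ∪ S') (K0 ∪ K') ∧ (S0 ∪ S').card = S0.card + S'.card ∧
      (K0 ∪ K').card = K0.card + K'.card := by
  refine ⟨⟨?_, ?_, ?_, ?_, ?_, ?_⟩, ?_, ?_⟩
  · exact union_subset h0.sS (h'.sS.trans hYX)
  · intro A hA
    rcases mem_union.1 hA with hA | hA
    · exact h0.sub A hA
    · exact (h'.sub A hA).trans hYX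
  · intro A hA x hx hxS
    rcases mem_union.1 hA with hA | hA <;> rcases mem_union.1 hxS with hxS | hxS
    · exact h0.dS A hA x hx hxS
    · exact hYK A hA x hx (h'.sS hxS)
    · exact hYS x (h'.sub A hA hx) hxS
    · exact h'.dS A hA x hx hxS
  · intro A hA
    rcases mem_union.1 hA with hA | hA
    · exact h0.odd A hA
    · exact h'.odd A hA
  · intro A hA x hx y hy hxy
    rw [mem_union]
    rcases mem_union.1 hA with hA | hA
    · rcases h0.cl A hA x hx y hy hxy with h | h
      · exact Or.inl h
      · exact Or.inr (Or.inl h)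
    · rcases hcl x (h'.sub A hA hx) y hy hxy with h | h
      · rcases h'.cl A hA x hx y h hxy with h | h
        · exact Or.inl h
        · exact Or.inr (Or.inr h)
      · exact Or.inr (Or.inl h)
  · intro A hA B hB x hxA hxB
    rcases mem_union.1 hA with hA | hA <;> rcases mem_union.1 hB with hB | hB
    · exact h0.dj A hA B hB x hxA hxB
    · exact absurd (h'.sub B hB hxB) (hYK A hA x hxA)
    · exact absurd (h'.sub A hA hxA) (hYK B hB x hxB)
    · exact h'.dj A hA B hB x hxA hxB
  · apply card_union_of_disjoint
    rw [Finset.disjoint_right]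
    intro x hx
    exact hYS x (h'.sS hx)
  · apply card_union_of_disjoint
    rw [Finset.disjoint_left]
    intro A hA hA'
    obtain ⟨x, hx⟩ := Finset.card_pos.1 (h'.odd A hA').pos
    exact hYK A hA x hx (h'.sub A hA' hx)

lemma chThm (X : Finset W) (P : Finset W → Prop)
    (h : ∀ S K, Bar Γ X S K → (∀ A ∈ K, ¬ P A) → K.card ≤ S.card) :
    ∃ Q : Finset (Finset W), (∀ A ∈ Q, P A ∧ A ⊆ X) ∧
      (∀ A ∈ Q, ∀ B ∈ Q, ∀ x ∈ A, x ∈ B → A = B) ∧ HasPM Γ (X \ Q.biUnion id) := by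
  set N : ℤ := (Fintype.card W : ℤ) with hN
  let score : Finset W × Finset (Finset W) → ℤ :=
    fun p => ((p.2.card : ℤ) - p.1.card) * (N + 1) + p.1.card
  have hb0 : Bar Γ X ∅ ∅ := by constructor <;> simp
  obtain ⟨⟨S, K⟩, hSK, hmax⟩ := Finset.exists_max_image
    (univ.filter (fun p : Finset W × Finset (Finset W) => Bar Γ X p.1 p.2)) score
    ⟨(∅, ∅), by simpa using hb0⟩
  replace hSK : Bar Γ X S K := by simpa using hSK
  have hsc : ∀ S' K', Bar Γ X S' K' →
      ((K'.card : ℤ) - S'.card) * (N + 1) + S'.card ≤ ((K.card : ℤ) - S.card) * (N + 1) + S.card := by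
    intro S' K' hb
    exact hmax (S', K') (by simpa using hb)
  have hle : ∀ S : Finset W, (S.card : ℤ) ≤ N := fun S => by
    rw [hN]; exact_mod_cast Finset.card_le_univ S
  have M1 : ∀ S' K', Bar Γ X S' K' → (K'.card : ℤ) - S'.card ≤ (K.card : ℤ) - S.card := by
    intro S' K' hb
    by_contra hlt
    push Not at hlt
    have h1 := hsc S' K' hb
    have h2 := hle S
    have h3 := hle S'
    nlinarith
  have M2 : ∀ S' K', Bar Γ X S' K' → (K.card : ℤ) - S.card ≤ (K'.card : ℤ) - S'.card →
      S'.card ≤ S.card := by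
    intro S' K' hb hge
    have h1 := hsc S' K' hb
    have := le_antisymm hge (M1 S' K' hb)
    rw [this] at h1
    have : (S'.card : ℤ) ≤ S.card := by linarith
    exact_mod_cast this
  have hd0 : S.card ≤ K.card := by
    have := M1 ∅ ∅ hb0
    simp at this
    omega
  -- critical
  have crit : ∀ A ∈ K, ∀ v ∈ A, HasPM Γ (A.erase v) := by
    intro A hA v hv
    apply tutteFam'
    · rw [card_erase_of_mem hv]
      have := hSK.odd A hA
      grind
    · intro S' K' hb'
      by_contra hge
      push Not at hge
      have hvS : v ∉ S := hSK.dS A hA v hv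
      have hb1 : Bar Γ X (insert v S) (K.erase A) := by
        refine ⟨?_, ?_, ?_, ?_, ?_, ?_⟩
        · exact insert_subset (hSK.sub A hA hv) hSK.sS
        · exact fun B hB => hSK.sub B (mem_of_mem_erase hB)
        · intro B hB x hx hxS
          rcases mem_insert.1 hxS with rfl | hxS
          · exact (mem_erase.1 hB).1 (hSK.dj B (mem_of_mem_erase hB) A hA x hx hv)
          · exact hSK.dS B (mem_of_mem_erase hB) x hx hxS
        · exact fun B hB => hSK.odd B (mem_of_mem_erase hB)
        · intro B hB x hx y hy hxy
          rcases hSK.cl B (mem_of_mem_erase hB) x hx y hy hxy with h | h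
          · exact Or.inl h
          · exact Or.inr (mem_insert_of_mem h)
        · exact fun B hB C hC => hSK.dj B (mem_of_mem_erase hB) C (mem_of_mem_erase hC)
      obtain ⟨hb2, hc1, hc2⟩ := hb1.glue hb' ((erase_subset _ _).trans (hSK.sub A hA))
        (by
          intro y hy hyS
          rw [mem_erase] at hy
          rcases mem_insert.1 hyS with rfl | hyS
          · exact hy.1 rfl
          · exact hSK.dS A hA y hy.2 hyS)
        (by
          intro B hB x hx hxA
          exact (mem_erase.1 hB).1
            (hSK.dj B (mem_of_mem_erase hB) A hA x hx (mem_of_mem_erase hxA)))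
        (by
          intro x hx y hy hxy
          rcases hSK.cl A hA x (mem_of_mem_erase hx) y hy hxy with h | h
          · by_cases hyv : y = v
            · right; simp [hyv]
            · left; simp [hyv, h]
          · right; simp [h])
      rw [card_insert_of_notMem hvS] at hc1
      rw [card_erase_of_mem hA] at hc2
      have hKpos : 0 < K.card := card_pos.2 ⟨A, hA⟩
      have := M2 _ _ hb2 (by omega)
      omega
  set R := (X \ S) \ K.biUnion id with hR
  have hRmem : ∀ x, x ∈ R ↔ x ∈ X ∧ x ∉ S ∧ ∀ A ∈ K, x ∉ A := by
    intro x
    simp [hR, and_assoc]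
  have hRPM : HasPM Γ R := by
    apply tutteFam
    intro S' K' hb'
    by_contra hlt
    obtain ⟨hb2, hc1, hc2⟩ := hSK.glue hb' (fun x hx => ((hRmem x).1 hx).1)
      (fun x hx => ((hRmem x).1 hx).2.1) (fun A hA x hx hxR => ((hRmem x).1 hxR).2.2 A hA hx)
      (by
        intro x hx y hy hxy
        by_contra hcon
        push Not at hcon
        have h1 := hcon.1
        rw [hRmem] at h1
        push Not at h1
        obtain ⟨A, hA, hyA⟩ := h1 hy hcon.2
        rcases hSK.cl A hA y hyA x ((hRmem x).1 hx).1 hxy.symm with h | h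
        · exact ((hRmem x).1 hx).2.2 A hA h
        · exact ((hRmem x).1 hx).2.1 h)
    have := M1 _ _ hb2
    omega
  -- Hall
  obtain ⟨d, hd⟩ : ∃ d, K.card = S.card + d := ⟨K.card - S.card, by omega⟩
  let t : {A // A ∈ K} → Finset (W ⊕ Fin d) := fun A =>
    univ.filter (Sum.elim (fun s => s ∈ S ∧ ∃ v ∈ A.1, Γ.Adj v s) (fun _ => P A.1))
  have hall : ∀ I : Finset {A // A ∈ K}, I.card ≤ (I.biUnion t).card := by
    intro I
    set J := I.map (Function.Embedding.subtype _) with hJ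
    have hJK : ∀ A, A ∈ J → ∃ hA : A ∈ K, (⟨A, hA⟩ : {A // A ∈ K}) ∈ I := by
      intro A hA
      simpa [hJ] using hA
    set S1 := S.filter (fun s => ∃ A ∈ J, ∃ v ∈ A, Γ.Adj v s) with hS1
    have hbJ : Bar Γ X S1 J := by
      refine ⟨(filter_subset _ _).trans hSK.sS, ?_, ?_, ?_, ?_, ?_⟩
      · intro A hA; exact hSK.sub A (hJK A hA).1
      · intro A hA x hx hxS; exact hSK.dS A (hJK A hA).1 x hx (mem_filter.1 hxS).1
      · intro A hA; exact hSK.odd A (hJK A hA).1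
      · intro A hA x hx y hy hxy
        rcases hSK.cl A (hJK A hA).1 x hx y hy hxy with h | h
        · exact Or.inl h
        · exact Or.inr (mem_filter.2 ⟨h, A, hA, x, hx, hxy⟩)
      · intro A hA B hB; exact hSK.dj A (hJK A hA).1 B (hJK B hB).1
    have hJc : J.card = I.card := card_map _
    by_cases hP : ∃ A ∈ J, P A
    · obtain ⟨A, hA, hPA⟩ := hP
      have hsub : S1.disjSum (univ : Finset (Fin d)) ⊆ I.biUnion t := by
        intro z hz
        rw [mem_biUnion]
        rcases z with s | i
        · simp only [inl_mem_disjSum, hS1, mem_filter] at hz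
          obtain ⟨hs, B, hB, hv⟩ := hz
          obtain ⟨hBK, hBI⟩ := hJK B hB
          exact ⟨_, hBI, by simpa [t] using ⟨hs, hv⟩⟩
        · obtain ⟨hBK, hBI⟩ := hJK A hA
          exact ⟨_, hBI, by simpa [t] using hPA⟩
      have h1 := card_le_card hsub
      rw [card_disjSum, card_univ, Fintype.card_fin] at h1
      have h2 := M1 _ _ hbJ
      omega
    · push Not at hP
      have h1 := h _ _ hbJ hP
      have hsub : S1.map Function.Embedding.inl ⊆ I.biUnion t := by
        intro z hz
        rw [mem_biUnion]
        simp only [mem_map, hS1, mem_filter] at hz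
        obtain ⟨s, ⟨hs, B, hB, hv⟩, rfl⟩ := hz
        obtain ⟨hBK, hBI⟩ := hJK B hB
        exact ⟨_, hBI, by simpa [t] using ⟨hs, hv⟩⟩
      have h2 := card_le_card hsub
      rw [card_map] at h2
      omega
  obtain ⟨f, hfinj, hft⟩ := (Finset.all_card_le_biUnion_card_iff_exists_injective t).1 hall
  have hfl : ∀ A s, f A = Sum.inl s → s ∈ S ∧ ∃ v ∈ A.1, Γ.Adj v s := by
    intro A s hA
    have := hft A
    rw [hA] at this
    simpa [t] using this
  have hfr : ∀ A i, f A = Sum.inr i → P A.1 := by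
    intro A s hA
    have := hft A
    rw [hA] at this
    simpa [t] using this
  have hsurj : ∀ s ∈ S, ∃ A, f A = Sum.inl s := by
    have himg : univ.image f = S.disjSum (univ : Finset (Fin d)) := by
      apply eq_of_subset_of_card_le
      · intro z hz
        simp only [mem_image, mem_univ, true_and] at hz
        obtain ⟨A, hA⟩ := hz
        rcases z with s | i
        · simpa using (hfl A s hA).1
        · simp
      · rw [card_image_of_injective _ hfinj]
        simp [hd]
    intro s hs
    have : Sum.inl s ∈ univ.image f := by rw [himg]; simpa using hs
    simpa using this
  let g : {A // A ∈ K} → Finset W := fun A => Sum.elim (fun s => insert s A.1) (fun _ => ∅) (f A)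
  have hgl : ∀ A s, f A = Sum.inl s → g A = insert s A.1 := by
    intro A s hA; simp [g, hA]
  have hgr : ∀ A i, f A = Sum.inr i → g A = ∅ := by
    intro A s hA; simp [g, hA]
  refine ⟨K.filter (fun A => ∃ hA : A ∈ K, ∃ i, f ⟨A, hA⟩ = Sum.inr i), ?_, ?_, ?_⟩
  · intro A hA
    obtain ⟨hA, _, i, hi⟩ := mem_filter.1 hA
    exact ⟨hfr _ _ hi, hSK.sub A hA⟩
  · intro A hA B hB
    exact hSK.dj A (mem_filter.1 hA).1 B (mem_filter.1 hB).1
  · have hgPM : HasPM Γ (univ.biUnion g) := by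
      apply HasPM.biUnion
      · intro A _
        rcases hfA : f A with s | i
        · rw [hgl A s hfA]
          obtain ⟨hs, v, hv, hvs⟩ := hfl A s hfA
          have hsA : s ∉ A.1 := fun hsA => hSK.dS A.1 A.2 s hsA hs
          have : insert s A.1 = A.1.erase v ∪ {v, s} := by
            ext x
            simp only [mem_insert, mem_union, mem_erase, mem_singleton]
            by_cases hxv : x = v
            · simp [hxv, hv]
            · simp [hxv]; tauto
          rw [this]
          apply (crit A.1 A.2 v hv).union (HasPM.pair hvs)
          rw [Finset.disjoint_left]
          intro x hx hx'
          rw [mem_erase] at hx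
          rcases (by simpa using hx' : x = v ∨ x = s) with rfl | rfl
          · exact hx.1 rfl
          · exact hsA hx.2
        · rw [hgr A i hfA]
          exact ⟨id, by simp⟩
      · intro A _ B _ x hxA hxB
        rcases hfA : f A with s | i
        swap
        · rw [hgr A i hfA] at hxA; simp at hxA
        rcases hfB : f B with s' | i
        swap
        · rw [hgr B i hfB] at hxB; simp at hxB
        rw [hgl A s hfA] at hxA
        rw [hgl B s' hfB] at hxB
        have hs := (hfl A s hfA).1
        have hs' := (hfl B s' hfB).1
        rcases mem_insert.1 hxA with rfl | hxA <;> rcases mem_insert.1 hxB with rfl | hxB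
        · exact hfinj (hfA.trans hfB.symm)
        · exact absurd hs (hSK.dS B.1 B.2 _ hxB)
        · exact absurd hs' (hSK.dS A.1 A.2 _ hxA)
        · exact Subtype.ext (hSK.dj A.1 A.2 B.1 B.2 x hxA hxB)
    have hgmem : ∀ x A, x ∈ g A → (∃ s, f A = Sum.inl s) ∧ (x ∈ S ∨ x ∈ A.1) := by
      intro x A hx
      rcases hfA : f A with s | i
      · rw [hgl A s hfA] at hx
        refine ⟨⟨s, rfl⟩, ?_⟩
        rcases mem_insert.1 hx with rfl | hx
        · exact Or.inl (hfl A _ hfA).1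
        · exact Or.inr hx
      · rw [hgr A i hfA] at hx; simp at hx
    have heq : X \ (K.filter (fun A => ∃ hA : A ∈ K, ∃ i, f ⟨A, hA⟩ = Sum.inr i)).biUnion id
        = R ∪ univ.biUnion g := by
      ext x
      simp only [mem_sdiff, mem_biUnion, mem_filter, id, mem_union, mem_univ, true_and]
      constructor
      · rintro ⟨hx, hno⟩
        by_cases hxS : x ∈ S
        · obtain ⟨A, hA⟩ := hsurj x hxS
          exact Or.inr ⟨A, by rw [hgl A x hA]; simp⟩
        by_cases hxK : ∃ A ∈ K, x ∈ A
        · obtain ⟨A, hA, hxA⟩ := hxK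
          right
          refine ⟨⟨A, hA⟩, ?_⟩
          rcases hfA : f ⟨A, hA⟩ with s | i
          · rw [hgl _ s hfA]; simp [hxA]
          · exact absurd ⟨A, ⟨hA, hA, i, hfA⟩, hxA⟩ hno
        · push Not at hxK
          exact Or.inl ((hRmem x).2 ⟨hx, hxS, hxK⟩)
      · rintro (hx | ⟨A, hx⟩)
        · have := (hRmem x).1 hx
          refine ⟨this.1, ?_⟩
          rintro ⟨B, ⟨hB, -⟩, hxB⟩
          exact this.2.2 B hB hxB
        · obtain ⟨⟨s, hs⟩, h2⟩ := hgmem x A hx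
          refine ⟨h2.elim (fun h => hSK.sS h) (fun h => hSK.sub A.1 A.2 h), ?_⟩
          rintro ⟨B, ⟨hB, _, i, hi⟩, hxB⟩
          rcases h2 with h2 | h2
          · exact hSK.dS B hB x hxB h2
          · have : A = ⟨B, hB⟩ := Subtype.ext (hSK.dj A.1 A.2 B hB x h2 hxB)
            rw [this, hi] at hs
            exact absurd hs (by simp)
    rw [heq]
    apply hRPM.union hgPM
    rw [Finset.disjoint_left]
    intro x hx hx'
    obtain ⟨A, -, hxA⟩ := mem_biUnion.1 hx'
    have h1 := (hRmem x).1 hx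
    rcases (hgmem x A hxA).2 with h | h
    · exact h1.2.1 h
    · exact h1.2.2 A.1 A.2 h

end Generic

section Gadget
set_option linter.unusedSectionVars false
open scoped Classical

abbrev GW (V : Type*) (c : ℕ) := (V × V) ⊕ (V × Fin c)

variable {V : Type*} [Fintype V] [DecidableEq V]

def gam (V : Type*) (c : ℕ) : SimpleGraph (GW V c) where
  Adj := Sum.elim (fun p => Sum.elim (fun q => q = p.swap ∧ p.1 ≠ p.2) (fun q => p.1 = q.1))
    (fun q => Sum.elim (fun p => p.1 = q.1) (fun _ => False))
  symm := ⟨by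
    rintro (p | p) (q | q) h
    · simp only [Sum.elim_inl] at h ⊢
      obtain ⟨rfl, h⟩ := h
      simp [h.symm]
    · simpa using h
    · simpa using h
    · simp at h⟩
  loopless := ⟨by
    rintro (p | p) h
    · simp only [Sum.elim_inl] at h
      obtain ⟨h1, h2⟩ := h
      exact h2 (congrArg Prod.fst h1)
    · simp at h⟩

noncomputable def wt {c : ℕ} (j : ℕ) : GW V c → GW V c → ℕ :=
  Sum.elim (fun p => Sum.elim (fun q => if q = p.swap then j else 0)
      (fun q => if q.1 = p.1 then 1 else 0))
    (fun q => Sum.elim (fun p => if q.1 = p.1 then 1 else 0) (fun _ => 0))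

noncomputable def full (G : SimpleGraph V) (c : ℕ) (C : Finset V) : Finset (GW V c) :=
  univ.filter (Sum.elim (fun p => p.1 ∈ C ∧ G.Adj p.1 p.2) (fun q => q.1 ∈ C))

noncomputable def darts (G : SimpleGraph V) : Finset (V × V) := univ.filter (fun p => G.Adj p.1 p.2)

noncomputable def bd (G : SimpleGraph V) (C : Finset V) : ℕ :=
  ((darts G).filter (fun p => p.1 ∈ C ∧ p.2 ∉ C)).card

noncomputable def cost (G : SimpleGraph V) {c : ℕ} (j : ℕ) (K : Finset (GW V c)) : ℕ :=
  ∑ x ∈ K, ∑ y ∈ full G c univ \ K, wt j x y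

noncomputable def ci {c : ℕ} (K : Finset (GW V c)) (v : V) : ℕ :=
  (univ.filter (fun i : Fin c => Sum.inr (v, i) ∈ K)).card
noncomputable def co {c : ℕ} (K : Finset (GW V c)) (v : V) : ℕ :=
  (univ.filter (fun i : Fin c => Sum.inr (v, i) ∉ K)).card

noncomputable def phi {c : ℕ} (j : ℕ) (K : Finset (GW V c)) (p : V × V) : ℕ :=
  if Sum.inl p ∈ K then co K p.1 + (if Sum.inl p.swap ∈ K then 0 else j) else ci K p.1

variable {G : SimpleGraph V} {c j : ℕ}

@[simp] lemma mem_full_inl {C : Finset V} {p : V × V} :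
    (Sum.inl p : GW V c) ∈ full G c C ↔ p.1 ∈ C ∧ G.Adj p.1 p.2 := by simp [full]
@[simp] lemma mem_full_inr {C : Finset V} {q : V × Fin c} :
    (Sum.inr q : GW V c) ∈ full G c C ↔ q.1 ∈ C := by simp [full]
@[simp] lemma mem_darts {p : V × V} : p ∈ darts G ↔ G.Adj p.1 p.2 := by simp [darts]

lemma ci_add_co (K : Finset (GW V c)) (v : V) : ci K v + co K v = c := by
  have := Finset.card_filter_add_card_filter_not (s := (univ : Finset (Fin c)))
    (fun i : Fin c => Sum.inr (v, i) ∈ K)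
  simpa [ci, co] using this

lemma cost_eq (K : Finset (GW V c)) (hK : K ⊆ full G c univ) :
    cost G j K = ∑ p ∈ darts G, phi j K p := by
  have h1 : cost G j K = ∑ x, ∑ y, if x ∈ K ∧ y ∈ full G c univ ∧ y ∉ K then wt j x y else 0 := by
    unfold cost
    rw [← Finset.sum_subset (Finset.subset_univ K)]
    · apply Finset.sum_congr rfl
      intro x hx
      rw [← Finset.sum_filter]
      apply Finset.sum_congr _ (fun _ _ => rfl)
      ext y
      simp [hx]
    · intro x _ hx
      simp [hx]
  rw [h1, Fintype.sum_sum_type]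
  simp only [Fintype.sum_sum_type, wt, Sum.elim_inl, Sum.elim_inr, mem_full_inl, mem_full_inr,
    mem_univ, true_and, ite_self, sum_const_zero, add_zero]
  rw [Finset.sum_comm (f := fun (q : V × Fin c) (p : V × V) => _), ← Finset.sum_add_distrib]
  unfold darts
  rw [Finset.sum_filter]
  apply Finset.sum_congr rfl
  intro p _
  have e1 : (∑ x : V × V, if Sum.inl p ∈ K ∧ G.Adj x.1 x.2 ∧ Sum.inl x ∉ K then
      (if x = p.swap then j else 0) else 0) =
      if Sum.inl p ∈ K ∧ G.Adj p.2 p.1 ∧ Sum.inl p.swap ∉ K then j else 0 := by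
    rw [Finset.sum_eq_single p.swap]
    · simp
    · intro b _ hb; simp [hb]
    · simp
  have e2 : (∑ x : V × Fin c, if Sum.inl p ∈ K ∧ Sum.inr x ∉ K then
      (if x.1 = p.1 then 1 else 0) else 0) = if Sum.inl p ∈ K then co K p.1 else 0 := by
    rw [Fintype.sum_prod_type, Finset.sum_eq_single p.1]
    · by_cases h : Sum.inl p ∈ K
      · simp [h, co, Finset.card_filter, -Finset.sum_boole]
      · simp [h]
    · intro b _ hb; simp [hb]
    · simp
  have e3 : (∑ x : V × Fin c, if Sum.inr x ∈ K ∧ G.Adj p.1 p.2 ∧ Sum.inl p ∉ K then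
      (if x.1 = p.1 then 1 else 0) else 0) =
        if G.Adj p.1 p.2 ∧ Sum.inl p ∉ K then ci K p.1 else 0 := by
    rw [Fintype.sum_prod_type, Finset.sum_eq_single p.1]
    · by_cases h : G.Adj p.1 p.2 ∧ Sum.inl p ∉ K
      · simp [h, ci]
      · simp [h]
    · intro b _ hb; simp [hb]
    · simp
  rw [e1, e2, e3]
  unfold phi
  by_cases h : Sum.inl p ∈ K
  · have := hK h
    simp at this
    simp [h, this, this.symm]
    by_cases h' : Sum.inl p.swap ∈ K <;> simp [h']; omega
  · simp [h]

lemma wt_sum (hdeg : ∀ v, (univ.filter (G.Adj v)).card = j + c) (y : GW V c) :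
    ∑ x ∈ full G c univ, wt j x y ≤ j + c := by
  unfold full
  rw [Finset.sum_filter, Fintype.sum_sum_type]
  rcases y with q | q
  · simp only [wt, Sum.elim_inl, Sum.elim_inr, mem_univ, true_and, if_true]
    apply add_le_add
    · rw [Finset.sum_eq_single q.swap]
      · simp; split_ifs <;> simp
      · intro b _ hb
        have : q ≠ b.swap := by rintro rfl; simp at hb
        simp [this]
      · simp
    · rw [Fintype.sum_prod_type, Finset.sum_eq_single q.1]
      · simp
      · intro b _ hb; simp [hb]
      · simp
  · simp only [wt, Sum.elim_inl, Sum.elim_inr, mem_univ, true_and, if_true, sum_const_zero, add_zero]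
    rw [Fintype.sum_prod_type, Finset.sum_eq_single q.1]
    · rw [← hdeg q.1, Finset.card_filter]; simp
    · intro b _ hb; simp [hb.symm]
    · simp

lemma full_mono {C D : Finset V} (h : C ⊆ D) : full G c C ⊆ full G c D := by
  rintro (p | p) hp
  · simp at hp ⊢; exact ⟨h hp.1, hp.2⟩
  · simp at hp ⊢; exact h hp

lemma cost_sum (hdeg : ∀ v, (univ.filter (G.Adj v)).card = j + c) {C : Finset V}
    {S : Finset (GW V c)} {K : Finset (Finset (GW V c))} (h : Bar (gam V c) (full G c C) S K) :
    ∑ A ∈ K, cost G j A ≤ (j + c) * S.card + j * bd G C := by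
  let dang : GW V c → ℕ := Sum.elim (fun p => if p.2 ∉ C then j else 0) (fun _ => 0)
  have h1 : ∀ A ∈ K, ∀ x ∈ A, ∑ y ∈ full G c univ \ A, wt j x y ≤ ∑ y ∈ S, wt j x y + dang x := by
    intro A hA x hx
    have hxC := h.sub A hA hx
    have key : ∀ y ∈ full G c univ \ A, y ∉ S → y ∈ full G c C → wt j x y = 0 := by
      intro y hy hyS hyC
      have hn : ¬ (gam V c).Adj x y := by
        intro hadj
        rcases h.cl A hA x hx y hyC hadj with h | h
        · exact (mem_sdiff.1 hy).2 h
        · exact hyS h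
      rcases x with p | p <;> rcases y with q | q
      · simp at hxC
        simp [gam] at hn
        simp [wt]
        intro h1 
        exact absurd (hn h1) hxC.2.ne
      · simp [gam] at hn
        simp [wt]
        exact fun h => hn h.symm
      · simp [gam] at hn
        simp [wt]
        exact fun h => hn h.symm
      · simp [wt]
    have hsp : ∑ y ∈ full G c univ \ A, wt j x y ≤
        ∑ y ∈ S, wt j x y + ∑ y ∈ univ.filter (fun y => y ∈ full G c univ ∧ y ∉ full G c C), wt j x y := by
      rw [← Finset.sum_filter_add_sum_filter_not (full G c univ \ A) (fun y => y ∈ S)]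
      apply add_le_add
      · apply Finset.sum_le_sum_of_subset
        intro y hy; exact (mem_filter.1 hy).2
      · rw [← Finset.sum_filter_add_sum_filter_not _ (fun y => y ∈ full G c C)]
        rw [Finset.sum_eq_zero, zero_add]
        · apply Finset.sum_le_sum_of_subset
          intro y hy
          have h1 := (mem_filter.1 hy).2
          have h2 := (mem_sdiff.1 (mem_filter.1 (mem_filter.1 hy).1).1).1
          exact mem_filter.2 ⟨mem_univ _, h2, h1⟩
        · intro y hy
          simp only [mem_filter] at hy
          exact key y hy.1.1 hy.1.2 hy.2
    refine hsp.trans (Nat.add_le_add_left ?_ _)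
    rw [Finset.sum_filter, Fintype.sum_sum_type]
    rcases x with p | p
    · simp at hxC
      simp only [wt, Sum.elim_inl, Sum.elim_inr, mem_full_inl, mem_full_inr, dang, mem_univ, true_and]
      have z : (∑ q : V × Fin c, if q.1 ∉ C then (if q.1 = p.1 then 1 else 0) else 0) = 0 := by
        apply Finset.sum_eq_zero
        intro q _
        by_cases hq : q.1 = p.1
        · simp [hq, hxC.1]
        · simp [hq]
      rw [z, Finset.sum_eq_single p.swap]
      · simp [hxC.2.symm]
      · intro b _ hb; simp [hb]
      · simp
    · simp at hxC
      simp only [wt, Sum.elim_inl, Sum.elim_inr, mem_full_inl, mem_full_inr, dang, mem_univ, true_and]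
      apply le_of_eq
      rw [Finset.sum_eq_zero, Finset.sum_eq_zero]
      · rfl
      · rintro q -
        by_cases hq : q.1 ∈ C
        · exact if_neg (fun h => h hq)
        · exact (if_pos hq)
      · rintro q -
        rw [ite_eq_right_iff]
        rintro ⟨h1, h2⟩
        rw [if_neg]
        intro h3
        exact h2 ⟨h3 ▸ hxC, h1⟩
  calc ∑ A ∈ K, cost G j A ≤ ∑ A ∈ K, ∑ x ∈ A, (∑ y ∈ S, wt j x y + dang x) := by
        apply Finset.sum_le_sum
        intro A hA
        exact Finset.sum_le_sum (h1 A hA)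
    _ = ∑ x ∈ K.biUnion id, (∑ y ∈ S, wt j x y + dang x) := by
        rw [Finset.sum_biUnion]
        · rfl
        · intro A hA B hB hne
          rw [Function.onFun, Finset.disjoint_left]
          intro x hx hx'
          exact hne (h.dj A hA B hB x hx hx')
    _ ≤ ∑ x ∈ full G c C, (∑ y ∈ S, wt j x y + dang x) := by
        apply Finset.sum_le_sum_of_subset
        intro x hx
        simp only [mem_biUnion, id] at hx
        obtain ⟨A, hA, hx⟩ := hx
        exact h.sub A hA hx
    _ = ∑ y ∈ S, ∑ x ∈ full G c C, wt j x y + ∑ x ∈ full G c C, dang x := by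
        rw [Finset.sum_add_distrib, Finset.sum_comm]
    _ ≤ (j + c) * S.card + j * bd G C := by
        apply add_le_add
        · rw [mul_comm, ← smul_eq_mul]
          apply Finset.sum_le_card_nsmul
          intro y _
          refine le_trans ?_ (wt_sum hdeg y)
          apply Finset.sum_le_sum_of_subset (full_mono (subset_univ _))
        · apply le_of_eq
          unfold full
          rw [Finset.sum_filter, Fintype.sum_sum_type]
          simp only [dang, Sum.elim_inl, Sum.elim_inr]
          rw [bd, darts, Finset.filter_filter, Finset.card_filter, Finset.mul_sum]
          refine (congrArg₂ (· + ·) (Finset.sum_congr rfl ?_)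
            (Finset.sum_eq_zero ?_)).trans (add_zero _)
          · intro p _
            by_cases h1 : p.1 ∈ C <;> by_cases h2 : p.2 ∈ C <;> by_cases h3 : G.Adj p.1 p.2 <;>
              simp [h1, h2, h3]
          · rintro q -
            by_cases hq : q.1 ∈ C
            · exact if_pos hq
            · exact if_neg hq

lemma even_sym (T : V × V → Prop) [DecidablePred T] (hs : ∀ p, T p → T p.swap) (hn : ∀ p, T p → p.1 ≠ p.2) :
    Even (univ.filter T).card := by
  have : ∑ p ∈ univ.filter T, (1 : ZMod 2) = 0 := by
    apply Finset.sum_involution (fun p _ => p.swap)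
    · intro p _; decide
    · intro p hp _ heq
      exact hn p (mem_filter.1 hp).2 (congrArg Prod.snd heq)
    · intro p hp; simp
    · intro p hp
      exact mem_filter.2 ⟨mem_univ _, hs p (mem_filter.1 hp).2⟩
  rw [Finset.sum_const, nsmul_eq_mul, mul_one] at this
  exact (ZMod.natCast_eq_zero_iff_even).1 this

lemma bd_parity (hdeg : ∀ v, (univ.filter (G.Adj v)).card = j + c) (hodd : Odd (j + c))
    (C : Finset V) : Odd (bd G C) ↔ Odd C.card := by
  have h1 : ((darts G).filter (fun p => p.1 ∈ C)).card = (j + c) * C.card := by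
    unfold darts
    rw [Finset.filter_filter, Finset.card_filter, Fintype.sum_prod_type]
    rw [← Finset.sum_subset (Finset.subset_univ C)]
    · rw [mul_comm, ← smul_eq_mul]
      apply Finset.sum_eq_card_nsmul
      intro v hv
      rw [← hdeg v, Finset.card_filter]
      simp [hv]
    · intro v _ hv
      simp [hv]
  have h2 : Even ((darts G).filter (fun p => p.1 ∈ C ∧ p.2 ∈ C)).card := by
    unfold darts
    rw [Finset.filter_filter]
    apply even_sym
    · rintro p ⟨h, h1, h2⟩
      exact ⟨h.symm, h2, h1⟩
    · rintro p ⟨h, -⟩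
      exact h.ne
  have h3 := Finset.card_filter_add_card_filter_not (s := (darts G).filter (fun p => p.1 ∈ C))
    (fun p => p.2 ∈ C)
  rw [Finset.filter_filter, Finset.filter_filter, h1] at h3
  have h4 : bd G C = ((darts G).filter (fun p => p.1 ∈ C ∧ p.2 ∉ C)).card := rfl
  rw [h4]
  generalize ((darts G).filter (fun p => p.1 ∈ C ∧ p.2 ∉ C)).card = x at *
  generalize ((darts G).filter (fun p => p.1 ∈ C ∧ p.2 ∈ C)).card = y at *
  have h5 : Odd (y + x) ↔ Odd C.card := by
    rw [h3, Nat.odd_mul]; tauto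
  rw [← h5, Nat.odd_add']
  tauto

lemma two_le {α : Type*} {s : Finset α} {f : α → ℕ} {p q : α} (hp : p ∈ s) (hq : q ∈ s)
    (hne : p ≠ q) : f p + f q ≤ ∑ x ∈ s, f x := by
  rw [← Finset.sum_pair hne]
  apply Finset.sum_le_sum_of_subset
  intro x hx
  rcases (by simpa using hx : x = p ∨ x = q) with rfl | rfl <;> assumption

lemma one_le' {α : Type*} {s : Finset α} {f : α → ℕ} {p : α} (hp : p ∈ s) :
    f p ≤ ∑ x ∈ s, f x := Finset.single_le_sum (fun _ _ => Nat.zero_le _) hp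

lemma swap_darts {p : V × V} (hp : p ∈ darts G) : p.swap ∈ darts G := by
  simp at hp ⊢; exact hp.symm

lemma swap_ne {p : V × V} (hp : p ∈ darts G) : p ≠ p.swap := by
  simp at hp
  intro h
  exact hp.ne (congrArg Prod.fst h)

noncomputable def E1 (G : SimpleGraph V) (K : Finset (GW V c)) : Finset (V × V) :=
  (darts G).filter (fun p => Sum.inl p ∈ K ∧ Sum.inl p.swap ∉ K)

lemma struct (hdeg : ∀ v, (univ.filter (G.Adj v)).card = j + c) (K : Finset (GW V c))
    (hK : K ⊆ full G c univ) (hcost : cost G j K < j + c) :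
    ∃ K1 : Finset V, (∀ v ∈ K1, ci K v = c ∧ co K v = 0) ∧ (∀ v ∉ K1, ci K v = 0 ∧ co K v = c) ∧
      (∀ p ∈ E1 G K, p.1 ∈ K1 ∧ p.2 ∉ K1) ∧ (Odd K.card ↔ Odd (c * K1.card + (E1 G K).card)) := by
  rw [cost_eq K hK] at hcost
  have dich : ∀ v, ci K v = 0 ∨ co K v = 0 := by
    intro v
    by_contra hcon
    push Not at hcon
    have h1 : ((darts G).filter (fun p => p.1 = v)).card = j + c := by
      unfold darts
      rw [Finset.filter_filter, Finset.card_filter, Fintype.sum_prod_type, Finset.sum_eq_single v]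
      · rw [← hdeg v, Finset.card_filter]; simp
      · intro b _ hb; simp [hb]
      · simp
    have h2 : ((darts G).filter (fun p => p.1 = v)).card ≤ ∑ p ∈ darts G, phi j K p := by
      rw [Finset.card_eq_sum_ones]
      refine le_trans ?_ (Finset.sum_le_sum_of_subset (filter_subset (fun p => p.1 = v) _))
      apply Finset.sum_le_sum
      intro p hp
      have := (mem_filter.1 hp).2
      unfold phi
      rw [this]
      split_ifs <;> omega
    omega
  set K1 := univ.filter (fun v => co K v = 0) with hK1
  have hin : ∀ v ∈ K1, ci K v = c ∧ co K v = 0 := by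
    intro v hv
    have := ci_add_co K v
    have := (mem_filter.1 hv).2
    omega
  have hout : ∀ v ∉ K1, ci K v = 0 ∧ co K v = c := by
    intro v hv
    have := ci_add_co K v
    have h1 : co K v ≠ 0 := fun h => hv (mem_filter.2 ⟨mem_univ _, h⟩)
    have := dich v
    omega
  refine ⟨K1, hin, hout, ?_, ?_⟩
  · intro p hp
    obtain ⟨hpd, hpK, hsK⟩ := mem_filter.1 hp
    have hphi : phi j K p = co K p.1 + j := by simp [phi, hpK, hsK]
    have hps : phi j K p.swap = ci K p.2 := by simp [phi, hsK]
    by_contra hcon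
    by_cases h1 : p.1 ∈ K1
    · have h2 : p.2 ∈ K1 := by tauto
      have := two_le (f := phi j K) hpd (swap_darts hpd) (swap_ne hpd)
      have := hin _ h2
      omega
    · have := hout _ h1
      have := one_le' (f := phi j K) hpd
      omega
  · have e1 : K.card = (univ.filter (fun p : V × V => Sum.inl p ∈ K)).card + ∑ v, ci K v := by
      have : K = univ.filter (fun x => x ∈ K) := by simp
      conv_lhs => rw [this]
      rw [Finset.card_filter, Fintype.sum_sum_type, Finset.card_filter, Fintype.sum_prod_type
        (f := fun q : V × Fin c => _)]
      simp [ci]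
    have e2 : ∑ v, ci K v = c * K1.card := by
      rw [← Finset.sum_subset (Finset.subset_univ K1) (fun v _ hv => (hout v hv).1), mul_comm,
        ← smul_eq_mul]
      exact Finset.sum_eq_card_nsmul (fun v hv => (hin v hv).1)
    have e3 := Finset.card_filter_add_card_filter_not
      (s := univ.filter (fun p : V × V => Sum.inl p ∈ K)) (fun p => Sum.inl p.swap ∈ K)
    rw [Finset.filter_filter, Finset.filter_filter] at e3
    have e4 : univ.filter (fun p : V × V => Sum.inl p ∈ K ∧ Sum.inl p.swap ∉ K) = E1 G K := by
      ext p
      simp only [E1, mem_filter, mem_univ, true_and, mem_darts]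
      constructor
      · rintro ⟨h1, h2⟩
        have := hK h1
        simp at this
        exact ⟨this, h1, h2⟩
      · exact fun h => h.2
    have e5 : Even (univ.filter (fun p : V × V => Sum.inl p ∈ K ∧ Sum.inl p.swap ∈ K)).card := by
      apply even_sym
      · rintro p ⟨h1, h2⟩; exact ⟨h2, by simpa using h1⟩
      · rintro p ⟨h1, h2⟩
        have := hK h1
        simp at this
        exact this.ne
    rw [e4] at e3
    rw [e1, e2, ← e3]
    have : ∀ a b d : ℕ, Even a → (Odd (a + b + d) ↔ Odd (d + b)) := by
      intro a b d h
      grind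
    exact this _ _ _ e5

lemma ci_pos_iff {K : Finset (GW V c)} {v : V} (h : ci K v = c) (i : Fin c) :
    Sum.inr (v, i) ∈ K := by
  have : univ.filter (fun i : Fin c => Sum.inr (v, i) ∈ K) = univ := by
    apply Finset.eq_univ_of_card
    simpa [ci] using h
  have h2 : i ∈ univ.filter (fun i : Fin c => Sum.inr (v, i) ∈ K) := by rw [this]; simp
  exact (mem_filter.1 h2).2

lemma ci_zero_iff {K : Finset (GW V c)} {v : V} (h : ci K v = 0) (i : Fin c) :
    Sum.inr (v, i) ∉ K := by
  intro hi
  have : univ.filter (fun i : Fin c => Sum.inr (v, i) ∈ K) = ∅ := card_eq_zero.1 h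
  have h2 : i ∈ univ.filter (fun i : Fin c => Sum.inr (v, i) ∈ K) := by simp [hi]
  rw [this] at h2
  simp at h2

lemma phi_E1 {K : Finset (GW V c)} {p : V × V} (hp : p ∈ E1 G K) : j ≤ phi j K p := by
  obtain ⟨hpd, hpK, hsK⟩ := mem_filter.1 hp
  simp [phi, hpK, hsK]

lemma E1_le_cost {K : Finset (GW V c)} (hK : K ⊆ full G c univ) :
    j * (E1 G K).card ≤ cost G j K := by
  rw [cost_eq K hK, mul_comm, ← smul_eq_mul]
  refine le_trans (Finset.card_nsmul_le_sum _ _ j (fun p hp => phi_E1 hp)) ?_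
  exact Finset.sum_le_sum_of_subset (filter_subset _ _)

/-- odd `j` case -/
lemma struct_odd (hdeg : ∀ v, (univ.filter (G.Adj v)).card = j + c) (hc : Even c)
    (K : Finset (GW V c)) (hK : K ⊆ full G c univ) (hcost : cost G j K < j + c)
    (ho : Odd K.card) :
    ∃ K1 : Finset V, K = full G c K1 ∧ Odd (bd G K1) ∧ j * bd G K1 < j + c ∧ j ≤ cost G j K := by
  obtain ⟨K1, hin, hout, hE, hpar⟩ := struct hdeg K hK hcost
  have hEo : Odd (E1 G K).card := by
    have := hpar.1 ho
    rw [Nat.odd_add'] at this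
    exact this.2 (hc.mul_right _)
  have hle := E1_le_cost (j := j) hK
  obtain ⟨p0, hp0⟩ := card_pos.1 hEo.pos
  have hp0d := (mem_filter.1 hp0).1
  have hdart : ∀ p ∈ darts G, (Sum.inl p ∈ K ↔ p.1 ∈ K1) := by
    intro p hp
    by_contra hcon
    have hphi : c ≤ phi j K p := by
      unfold phi
      by_cases hpK : Sum.inl p ∈ K
      · have : p.1 ∉ K1 := by tauto
        simp [hpK, (hout _ this).2]
      · have : p.1 ∈ K1 := by tauto
        simp [hpK, (hin _ this).1]
    have hne : p ≠ p0 := by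
      rintro rfl
      exact hcon ⟨fun _ => (hE p hp0).1, fun _ => (mem_filter.1 hp0).2.1⟩
    have := two_le (f := phi j K) hp hp0d hne
    have h2 := phi_E1 (j := j) hp0
    rw [cost_eq K hK] at hcost
    omega
  have hEbd : (E1 G K).card = bd G K1 := by
    unfold E1 bd
    congr 1
    ext p
    simp only [mem_filter]
    constructor
    · rintro ⟨h1, h2⟩
      exact ⟨h1, hE p (mem_filter.2 ⟨h1, h2⟩)⟩
    · rintro ⟨h1, h2, h3⟩
      refine ⟨h1, (hdart p h1).2 h2, ?_⟩
      rw [hdart _ (swap_darts h1)]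
      exact h3
  refine ⟨K1, ?_, hEbd ▸ hEo, by rw [← hEbd]; omega, ?_⟩
  · ext x
    rcases x with p | q
    · constructor
      · intro h
        have h1 := hK h
        simp at h1
        rw [mem_full_inl]
        exact ⟨(hdart p (mem_darts.2 h1)).1 h, h1⟩
      · intro h
        rw [mem_full_inl] at h
        exact (hdart p (mem_darts.2 h.2)).2 h.1
    · rw [mem_full_inr]
      constructor
      · intro h
        by_contra hq
        exact ci_zero_iff (hout _ hq).1 q.2 h
      · intro h
        exact ci_pos_iff (hin _ h).1 q.2
  · refine le_trans ?_ hle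
    exact Nat.le_mul_of_pos_right _ hEo.pos

/-- even `j` case -/
lemma struct_even (hdeg : ∀ v, (univ.filter (G.Adj v)).card = j + c) (hc : Odd c)
    (hj : Even j) (hjc : j ≤ 2 * c)
    (K : Finset (GW V c)) (hK : K ⊆ full G c univ) (hcost : cost G j K < j + c)
    (ho : Odd K.card) :
    ∃ K1 : Finset V, (∀ v ∈ K1, ∀ i, Sum.inr (v, i) ∈ K) ∧ bd G K1 = 1 ∧ c ≤ cost G j K := by
  obtain ⟨K1, hin, hout, hE, hpar⟩ := struct hdeg K hK hcost
  have hbp := bd_parity hdeg (hj.add_odd hc) K1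
  rw [cost_eq K hK] at hcost ⊢
  set D := (darts G).filter (fun p => p.1 ∈ K1 ∧ p.2 ∉ K1) with hD
  have hED : E1 G K ⊆ D := by
    intro p hp
    exact mem_filter.2 ⟨(mem_filter.1 hp).1, hE p hp⟩
  have hB := card_sdiff_add_card_eq_card hED
  have hbD : bd G K1 = D.card := rfl
  set B := D \ E1 G K with hBdef
  have hBo : Odd B.card := by
    have h1 := hpar.1 ho
    rw [hbD] at hbp
    rw [Nat.odd_add, Nat.odd_mul] at h1
    rw [← hB, Nat.odd_add] at hbp
    have h3 : Odd (E1 G K).card ↔ ¬ Even (E1 G K).card := Nat.not_even_iff_odd.symm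
    tauto
  have hBphi : ∀ p ∈ B, c ≤ phi j K p + phi j K p.swap ∧
      ∃ q ∈ darts G, q ∉ E1 G K ∧ c ≤ phi j K q := by
    intro p hp
    obtain ⟨hpD, hpE⟩ := mem_sdiff.1 hp
    obtain ⟨hpd, h1, h2⟩ := mem_filter.1 hpD
    by_cases hpK : Sum.inl p ∈ K
    · have hsK : Sum.inl p.swap ∈ K := by
        by_contra h
        exact hpE (mem_filter.2 ⟨hpd, hpK, h⟩)
      have : c ≤ phi j K p.swap := by
        have := (hout _ h2).2
        simp [phi, hsK, hpK, this]
      refine ⟨by omega, p.swap, swap_darts hpd, ?_, this⟩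
      intro h
      exact (mem_filter.1 h).2.2 (by simpa using hpK)
    · have : c ≤ phi j K p := by
        have := (hin _ h1).1
        simp [phi, hpK, this]
      refine ⟨by omega, p, hpd, hpE, this⟩
  have hE0 : E1 G K = ∅ := by
    by_contra hne
    obtain ⟨p0, hp0⟩ := Finset.nonempty_iff_ne_empty.2 hne
    obtain ⟨p1, hp1⟩ := card_pos.1 hBo.pos
    obtain ⟨-, q, hq, hqE, hqc⟩ := hBphi p1 hp1
    have hne : p0 ≠ q := by rintro rfl; exact hqE hp0
    have := two_le (f := phi j K) (mem_filter.1 hp0).1 hq hne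
    have := phi_E1 (j := j) hp0
    omega
  have hBD : ∀ p ∈ B, p ∈ darts G ∧ p.1 ∈ K1 ∧ p.2 ∉ K1 := by
    intro p hp
    exact mem_filter.1 (mem_sdiff.1 hp).1
  have hcB : B.card * c ≤ ∑ p ∈ darts G, phi j K p := by
    rw [← smul_eq_mul]
    refine le_trans (Finset.card_nsmul_le_sum _ _ c (fun p hp => (hBphi p hp).1)) ?_
    rw [Finset.sum_add_distrib]
    have : ∑ p ∈ B, phi j K p.swap = ∑ p ∈ B.image Prod.swap, phi j K p := by
      rw [Finset.sum_image]
      intro a _ b _ h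
      exact Prod.swap_injective h
    rw [this, ← Finset.sum_union]
    · apply Finset.sum_le_sum_of_subset
      intro p hp
      rcases mem_union.1 hp with hp | hp
      · exact (hBD p hp).1
      · obtain ⟨q, hq, rfl⟩ := mem_image.1 hp
        exact swap_darts (hBD q hq).1
    · rw [Finset.disjoint_left]
      intro p hp hp'
      obtain ⟨q, hq, rfl⟩ := mem_image.1 hp'
      exact (hBD _ hq).2.2 (hBD _ hp).2.1
  have hB1 : B.card = 1 := by
    obtain ⟨m, hm⟩ := hBo
    rcases m with _ | m
    · omega
    · exfalso
      rw [hm] at hcB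
      have : 3 * c ≤ (2 * (m + 1) + 1) * c := Nat.mul_le_mul_right _ (by omega)
      omega
  refine ⟨K1, ?_, ?_, ?_⟩
  · intro v hv i
    exact ci_pos_iff (hin v hv).1 i
  · rw [hbD, ← hB, hE0, hB1]; simp
  · rw [hB1] at hcB; omega


lemma pm_factor (hdeg : ∀ v, (univ.filter (G.Adj v)).card = j + c) (D : Finset V)
    (h : HasPM (gam V c) (full G c D)) :
    ∃ F : SimpleGraph V, F ≤ G ∧ (∀ u v, F.Adj u v → u ∈ D) ∧
      ∀ v ∈ D, (univ.filter (F.Adj v)).card = j := by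
  obtain ⟨m, hm⟩ := h
  let F : SimpleGraph V :=
    { Adj := fun u v => u ∈ D ∧ v ∈ D ∧ G.Adj u v ∧ m (Sum.inl (u, v)) = Sum.inl (v, u)
      symm := ⟨by
        rintro u v ⟨hu, hv, ha, he⟩
        refine ⟨hv, hu, ha.symm, ?_⟩
        have := (hm (Sum.inl (u, v)) (by simp [hu, ha])).2.2
        rwa [he] at this⟩
      loopless := ⟨by
        rintro u ⟨-, -, ha, -⟩
        exact ha.ne rfl⟩ }
  refine ⟨F, fun u v h => h.2.2.1, fun u v h => h.1, ?_⟩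
  intro v hv
  have h1 := Finset.card_filter_add_card_filter_not (s := univ.filter (G.Adj v)) (fun u => F.Adj v u)
  rw [Finset.filter_filter, Finset.filter_filter, hdeg v] at h1
  have h2 : univ.filter (fun u => G.Adj v u ∧ F.Adj v u) = univ.filter (F.Adj v) := by
    ext u
    simp only [mem_filter, mem_univ, true_and]
    exact ⟨fun h => h.2, fun h => ⟨h.2.2.1, h⟩⟩
  have hcore : ∀ i : Fin c, ∃ u, m (Sum.inr (v, i)) = Sum.inl (v, u) ∧ G.Adj v u := by
    intro i
    obtain ⟨a1, a2, a3⟩ := hm (Sum.inr (v, i)) (by simp [hv])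
    rcases hmi : m (Sum.inr (v, i)) with ⟨a, b⟩ | q
    · rw [hmi] at a1 a2
      have e : a = v := by simpa [gam] using a2
      subst e
      simp at a1
      exact ⟨b, rfl, a1.2⟩
    · rw [hmi] at a2
      simp [gam] at a2
  have h3 : c = (univ.filter (fun u => G.Adj v u ∧ ¬ F.Adj v u)).card := by
    refine (Finset.card_fin c).symm.trans ?_
    choose f hf1 hf2 using hcore
    apply Finset.card_bij (fun i _ => f i)
    · intro i _
      simp only [mem_filter, mem_univ, true_and]
      refine ⟨hf2 i, ?_⟩
      rintro ⟨-, -, -, he⟩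
      have := (hm (Sum.inr (v, i)) (by simp [hv])).2.2
      rw [hf1 i, he] at this
      simp at this
    · intro i _ i' _ he
      have a := (hm (Sum.inr (v, i)) (by simp [hv])).2.2
      have b := (hm (Sum.inr (v, i')) (by simp [hv])).2.2
      rw [hf1, he, ← hf1 i', b] at a
      simpa using a.symm
    · intro u hu
      simp only [mem_filter, mem_univ, true_and] at hu
      obtain ⟨hu1, hu2⟩ := hu
      obtain ⟨a1, a2, a3⟩ := hm (Sum.inl (v, u)) (by simp [hv, hu1])
      rcases hmi : m (Sum.inl (v, u)) with ⟨a, b⟩ | ⟨w, i⟩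
      · exfalso
        rw [hmi] at a1 a2
        have e : (a, b) = (u, v) := (by simpa [gam] using a2 : ((a, b) = (u, v)) ∧ _).1
        rw [e] at a1 hmi
        simp at a1
        exact hu2 ⟨hv, a1.1, hu1, hmi⟩
      · rw [hmi] at a2 a3
        have e : v = w := by simpa [gam] using a2
        subst e
        refine ⟨i, mem_univ _, ?_⟩
        have := hf1 i
        rw [a3] at this
        simpa using this.symm
  rw [h2, ← h3] at h1
  have h4 := Nat.add_right_cancel h1
  convert h4

lemma card_full (hdeg : ∀ v, (univ.filter (G.Adj v)).card = j + c) (C : Finset V) :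
    (full G c C).card = (j + c) * C.card + c * C.card := by
  have h1 : ((darts G).filter (fun p => p.1 ∈ C)).card = (j + c) * C.card := by
    unfold darts
    rw [Finset.filter_filter, Finset.card_filter, Fintype.sum_prod_type]
    rw [← Finset.sum_subset (Finset.subset_univ C)]
    · rw [mul_comm, ← smul_eq_mul]
      apply Finset.sum_eq_card_nsmul
      intro v hv
      rw [← hdeg v, Finset.card_filter]
      simp [hv]
    · intro v _ hv
      simp [hv]
  have h2 : full G c C =
      ((darts G).filter (fun p => p.1 ∈ C)).disjSum (C ×ˢ (univ : Finset (Fin c))) := by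
    ext x
    rcases x with p | q
    · simp [and_comm]
    · simp
  rw [h2, Finset.card_disjSum, h1, Finset.card_product]
  simp [mul_comm]

def Good (G : SimpleGraph V) (j j' : ℕ) (C : Finset V) : Prop :=
  ∃ F : SimpleGraph V, F ≤ G ∧ (∀ u v, F.Adj u v → u ∈ C) ∧
    (∀ v ∈ C, (univ.filter (F.Adj v)).card = j ∨ (univ.filter (F.Adj v)).card = j') ∧
    ∀ u v, F.Adj u v → (univ.filter (F.Adj u)).card = (univ.filter (F.Adj v)).card

lemma good_union {j' : ℕ} {C D : Finset V} (hC : Good G j j' C) (hD : Good G j j' D)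
    (hd : ∀ v ∈ C, v ∉ D) : Good G j j' (C ∪ D) := by
  obtain ⟨F1, a1, b1, c1, d1⟩ := hC
  obtain ⟨F2, a2, b2, c2, d2⟩ := hD
  obtain ⟨F, hF⟩ : ∃ F, F = F1 ⊔ F2 := ⟨_, rfl⟩
  have hadj : ∀ u v, F.Adj u v ↔ F1.Adj u v ∨ F2.Adj u v := by
    intro u v; rw [hF, sup_adj]
  have e1 : ∀ v ∈ C, univ.filter (F.Adj v) = univ.filter (F1.Adj v) := by
    intro v hv
    ext u
    simp only [mem_filter, mem_univ, true_and, hadj]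
    exact ⟨fun h => h.elim id (fun h => absurd (b2 _ _ h) (hd v hv)), Or.inl⟩
  have e2 : ∀ v ∈ D, univ.filter (F.Adj v) = univ.filter (F2.Adj v) := by
    intro v hv
    ext u
    simp only [mem_filter, mem_univ, true_and, hadj]
    exact ⟨fun h => h.elim (fun h => absurd hv (hd v (b1 _ _ h))) id, Or.inr⟩
  refine ⟨F, hF ▸ sup_le a1 a2, ?_, ?_, ?_⟩
  · intro u v h
    rcases (hadj u v).1 h with h | h
    · exact mem_union_left _ (b1 _ _ h)
    · exact mem_union_right _ (b2 _ _ h)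
  · intro v hv
    rcases mem_union.1 hv with hv | hv
    · rw [e1 v hv]; exact c1 v hv
    · rw [e2 v hv]; exact c2 v hv
  · intro u v h
    rcases (hadj u v).1 h with h | h
    · rw [e1 u (b1 _ _ h), e1 v (b1 _ _ h.symm)]; exact d1 _ _ h
    · rw [e2 u (b2 _ _ h), e2 v (b2 _ _ h.symm)]; exact d2 _ _ h

lemma good_fam {j' : ℕ} (hc : 0 < c) (Q : Finset (Finset (GW V c)))
    (h : ∀ A ∈ Q, ∃ P0, A = full G c P0 ∧ Good G j j' P0)
    (hd : ∀ A ∈ Q, ∀ B ∈ Q, ∀ x ∈ A, x ∈ B → A = B) :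
    ∃ D, Good G j j' D ∧ Q.biUnion id = full G c D := by
  induction Q using Finset.induction_on with
  | empty =>
    refine ⟨∅, ⟨⊥, bot_le, by simp, by simp, by simp⟩, ?_⟩
    ext x
    rcases x with p | q <;> simp
  | insert A Q hA ih =>
    obtain ⟨D, hD, hQ⟩ := ih (fun B hB => h B (mem_insert_of_mem hB))
      (fun B hB B' hB' => hd B (mem_insert_of_mem hB) B' (mem_insert_of_mem hB'))
    obtain ⟨P0, rfl, hP⟩ := h A (mem_insert_self _ _)
    refine ⟨P0 ∪ D, good_union hP hD ?_, ?_⟩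
    · intro v hv hv'
      have h1 : (Sum.inr (v, ⟨0, hc⟩) : GW V c) ∈ Q.biUnion id := by rw [hQ]; simpa using hv'
      obtain ⟨B, hB, hvB⟩ := mem_biUnion.1 h1
      have := hd _ (mem_insert_self _ _) B (mem_insert_of_mem hB) (Sum.inr (v, ⟨0, hc⟩))
        (by simpa using hv) hvB
      exact hA (this ▸ hB)
    · rw [Finset.biUnion_insert, hQ]
      ext x
      rcases x with p | q
      · simp; tauto
      · simp

lemma full_sub (hc : 0 < c) {C D : Finset V} (h : full G c C ⊆ full G c D) : C ⊆ D := by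
  intro v hv
  have : (Sum.inr (v, ⟨0, hc⟩) : GW V c) ∈ full G c D := h (by simpa using hv)
  simpa using this

lemma bd_sdiff {C K1 : Finset V} (h : K1 ⊆ C) : bd G (C \ K1) ≤ bd G C + bd G K1 := by
  unfold bd
  have : bd G K1 = ((darts G).filter (fun p => p.2 ∈ K1 ∧ p.1 ∉ K1)).card := by
    unfold bd
    apply Finset.card_bij (fun p _ => p.swap)
    · intro p hp
      simp only [mem_filter, mem_darts] at hp ⊢
      exact ⟨hp.1.symm, hp.2⟩
    · intro p _ q _ h; exact Prod.swap_injective h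
    · intro p hp
      refine ⟨p.swap, ?_, by simp⟩
      simp only [mem_filter, mem_darts] at hp ⊢
      exact ⟨hp.1.symm, hp.2⟩
  unfold bd at this
  rw [this]
  refine le_trans (Finset.card_le_card ?_) (Finset.card_union_le _ _)
  intro p hp
  simp only [mem_filter, mem_union, mem_sdiff] at hp ⊢
  tauto

theorem main_claim {j' c' : ℕ} (hdeg : ∀ v, (univ.filter (G.Adj v)).card = j + c)
    (hdeg' : ∀ v, (univ.filter (G.Adj v)).card = j' + c') (hr : j + c = j' + c')
    (hj : Odd j) (hc : Even c) (hc0 : 0 < c) (hj' : Even j') (hc' : Odd c') (h1 : j' ≤ 2 * c')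
    (h2 : j' ≤ 2 * j) : ∀ (n : ℕ) (C : Finset V), C.card = n →
    ((Odd (bd G C) ∧ j * bd G C < j + c) ∨ (Even (bd G C) ∧ j * bd G C < j + c + j)) →
    Good G j j' C := by
  intro n
  induction n using Nat.strong_induction_on with
  | _ n IH =>
  intro C hCn hb
  have hro : Odd (j + c) := hj.add_even hc
  have hpar := bd_parity hdeg hro
  rcases hb with ⟨hbo, hblt⟩ | ⟨hbe, hblt⟩
  · by_cases hex : ∃ K1, K1 ⊆ C ∧ K1 ≠ C ∧ bd G K1 = 1
    · obtain ⟨K1, hs, hne, hb1⟩ := hex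
      have hss : K1 ⊂ C := hs.ssubset_of_ne hne
      have hlt := card_lt_card hss
      have hK1o : Odd K1.card := (hpar K1).1 (by rw [hb1]; exact odd_one)
      have g1 : Good G j j' K1 := IH _ (hCn ▸ hlt) K1 rfl
        (Or.inl ⟨by rw [hb1]; exact odd_one, by rw [hb1]; omega⟩)
      have hcard := card_sdiff_add_card_eq_card hs
      have hCo := (hpar C).1 hbo
      have he : Even (bd G (C \ K1)) := by
        rw [← Nat.not_odd_iff_even, hpar, Nat.not_odd_iff_even]
        grind
      have g2 : Good G j j' (C \ K1) := by
        have := hK1o.pos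
        refine IH _ (by omega) (C \ K1) rfl (Or.inr ⟨he, ?_⟩)
        have h3 := bd_sdiff (G := G) hs
        rw [hb1] at h3
        have := Nat.mul_le_mul_left j h3
        rw [mul_add] at this
        omega
      have := good_union g1 g2 (by simp +contextual)
      rwa [Finset.union_sdiff_of_subset hs] at this
    · have hpm : HasPM (gam V c') (full G c' C) := by
        apply tutteFam'
        · rw [card_full hdeg']
          have : Odd (j' + c') := hr ▸ hro
          grind
        · intro S K hbar
          by_contra hge
          push Not at hge
          have hs := cost_sum hdeg' hbar
          have key : ∀ A ∈ K, cost G j' A < j' + c' →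
              (∀ v ∈ C, ∀ i, Sum.inr (v, i) ∈ A) ∧ bd G C = 1 ∧ c' ≤ cost G j' A := by
            intro A hA hcost
            obtain ⟨K1, k1, k2, k3⟩ := struct_even hdeg' hc' hj' h1 A
              ((hbar.sub A hA).trans (full_mono (subset_univ _))) hcost (hbar.odd A hA)
            have hsub : K1 ⊆ C := by
              intro v hv
              have := hbar.sub A hA (k1 v hv ⟨0, hc'.pos⟩)
              simpa using this
            have : K1 = C := by
              by_contra hne
              exact hex ⟨K1, hsub, hne, k2⟩
            subst this
            exact ⟨k1, k2, k3⟩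
          have hm : (j' + c') * (S.card + 2) ≤ (j' + c') * K.card := Nat.mul_le_mul_left _ hge
          rw [mul_add] at hm
          have hc'0 := hc'.pos
          by_cases hA : ∃ A ∈ K, cost G j' A < j' + c'
          · obtain ⟨A, hAK, hAc⟩ := hA
            obtain ⟨k1, k2, k3⟩ := key A hAK hAc
            obtain ⟨v, hv⟩ := card_pos.1 ((hpar C).1 hbo).pos
            have hrest : (K.erase A).card * (j' + c') ≤ ∑ B ∈ K.erase A, cost G j' B := by
              rw [← smul_eq_mul]
              apply Finset.card_nsmul_le_sum
              intro B hB
              by_contra hlt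
              obtain ⟨hne, hBK⟩ := mem_erase.1 hB
              obtain ⟨l1, -⟩ := key B hBK (not_le.1 hlt)
              exact hne (hbar.dj B hBK A hAK _ (l1 v hv ⟨0, hc'0⟩) (k1 v hv ⟨0, hc'0⟩))
            rw [← Finset.add_sum_erase _ _ hAK, k2] at hs
            have hcd := card_erase_add_one hAK
            rw [← hcd, mul_add, mul_comm _ (K.erase A).card] at hm
            omega
          · push Not at hA
            have := Finset.card_nsmul_le_sum K (fun A => cost G j' A) _ hA
            rw [smul_eq_mul, mul_comm] at this
            have h5 : j' * bd G C ≤ 2 * j * bd G C := Nat.mul_le_mul_right _ h2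
            rw [mul_assoc] at h5
            omega
      obtain ⟨F, f1, f2, f3⟩ := pm_factor hdeg' C hpm
      refine ⟨F, f1, f2, fun v hv => Or.inr (f3 v hv), ?_⟩
      intro u v h
      rw [f3 u (f2 _ _ h), f3 v (f2 _ _ h.symm)]
  · obtain ⟨Q, hQ1, hQ2, hQ3⟩ := chThm (Γ := gam V c) (full G c C)
      (fun A => ∃ P0, A = full G c P0 ∧ Good G j j' P0) (by
        intro S K hbar hnP
        by_contra hlt
        push Not at hlt
        have hbig : ∀ A ∈ K, j + c ≤ cost G j A := by
          intro A hA
          by_contra hcost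
          obtain ⟨K1, rfl, k2, k3, -⟩ := struct_odd hdeg hc A
            ((hbar.sub A hA).trans (full_mono (subset_univ _))) (not_le.1 hcost) (hbar.odd A hA)
          have hsub : K1 ⊆ C := full_sub hc0 (hbar.sub _ hA)
          have hne : K1 ≠ C := by
            rintro rfl
            exact (Nat.not_odd_iff_even.2 hbe) k2
          refine hnP _ hA ⟨K1, rfl, IH _ ?_ K1 rfl (Or.inl ⟨k2, k3⟩)⟩
          rw [← hCn]
          exact card_lt_card (hsub.ssubset_of_ne hne)
        have hs := cost_sum hdeg hbar
        have hb := Finset.card_nsmul_le_sum K (fun A => cost G j A) _ hbig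
        rw [smul_eq_mul, mul_comm] at hb
        by_cases h2 : S.card + 2 ≤ K.card
        · have hm : (j + c) * (S.card + 2) ≤ (j + c) * K.card := Nat.mul_le_mul_left _ h2
          rw [mul_add] at hm
          omega
        · have hK : K.card = S.card + 1 := by omega
          have hXe : Even (full G c C).card := by
            rw [card_full hdeg]
            have : Even C.card := by
              rw [← Nat.not_odd_iff_even, ← hpar, Nat.not_odd_iff_even]; exact hbe
            grind
          obtain ⟨R, hRo, hRK, hbar'⟩ := hbar.rest (by rw [hK]; grind)
          have hs' := cost_sum hdeg hbar'
          rw [Finset.sum_insert hRK] at hs'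
          have hRc : j ≤ cost G j R := by
            by_cases hcost : cost G j R < j + c
            · obtain ⟨K1, -, -, -, k4⟩ := struct_odd hdeg hc R
                ((hbar'.sub R (mem_insert_self _ _)).trans (full_mono (subset_univ _))) hcost hRo
              exact k4
            · omega
          rw [hK, mul_add] at hb
          omega)
    obtain ⟨D, hD, hQD⟩ := good_fam hc0 Q (fun A hA => (hQ1 A hA).1) hQ2
    have hDC : D ⊆ C := by
      apply full_sub (G := G) hc0
      rw [← hQD]
      intro x hx
      obtain ⟨A, hA, hxA⟩ := mem_biUnion.1 hx
      exact (hQ1 A hA).2 hxA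
    have hfs : full G c C \ full G c D = full G c (C \ D) := by
      ext x
      rcases x with p | q
      · simp; tauto
      · simp
    rw [hQD, hfs] at hQ3
    obtain ⟨F, f1, f2, f3⟩ := pm_factor hdeg _ hQ3
    have g : Good G j j' (C \ D) := by
      refine ⟨F, f1, f2, fun v hv => Or.inl (f3 v hv), ?_⟩
      intro u v h
      rw [f3 u (f2 _ _ h), f3 v (f2 _ _ h.symm)]
    have := good_union hD g (by simp +contextual)
    rwa [Finset.union_sdiff_of_subset hDC] at this

end Gadget

open scoped Classical in
/-- Let `r ≥ 3` be odd and `1 ≤ k ≤ 2r/3`. Then every `r`-regular graph has a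
`[k-1, k]`-factor each of whose connected components is regular. -/
theorem stmt_7 {V : Type*} [Fintype V] (G : SimpleGraph V)
    (r k : ℕ) (hodd : Odd r) (hr : 3 ≤ r) (hk1 : 1 ≤ k) (hk2 : 3 * k ≤ 2 * r)
    (hreg : G.IsRegularOfDegree r) :
    ∃ F : SimpleGraph V, F ≤ G ∧
      (∀ v : V, k - 1 ≤ F.degree v ∧ F.degree v ≤ k) ∧
      (∀ c : F.ConnectedComponent, ∃ d : ℕ, ∀ v ∈ c.supp, F.degree v = d) := by
  have hdeg : ∀ v, (univ.filter (G.Adj v)).card = r := by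
    intro v
    rw [← hreg v, ← SimpleGraph.card_neighborFinset_eq_degree]
    congr 1
    ext u; simp
  obtain ⟨j, j', hjo, hje, hjj⟩ : ∃ j j', Odd j ∧ Even j' ∧
      ((j = k ∧ j' = k - 1) ∨ (j = k - 1 ∧ j' = k)) := by
    rcases Nat.even_or_odd k with h | h
    · exact ⟨k - 1, k, by grind, h, Or.inr ⟨rfl, rfl⟩⟩
    · exact ⟨k, k - 1, h, by grind, Or.inl ⟨rfl, rfl⟩⟩
  have hjp := hjo.pos
  have e1 : j + (r - j) = r := by omega
  have e2 : j' + (r - j') = r := by omega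
  have hb0 : bd G univ = 0 := by simp [bd]
  obtain ⟨F, hF, -, hd, hs⟩ := main_claim (G := G) (j := j) (c := r - j) (j' := j') (c' := r - j')
    (fun v => by rw [hdeg, e1]) (fun v => by rw [hdeg, e2]) (by omega) hjo (by grind) (by omega)
    hje (by grind) (by omega) (by omega) _ univ rfl
    (Or.inr ⟨by rw [hb0]; exact Even.zero, by rw [hb0]; omega⟩)
  have hdF : ∀ v, F.degree v = (univ.filter (F.Adj v)).card := by
    intro v
    rw [← SimpleGraph.card_neighborFinset_eq_degree]
    congr 1
    ext u; simp
  refine ⟨F, hF, ?_, ?_⟩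
  · intro v
    have := hd v (mem_univ _)
    rw [hdF]
    omega
  · intro c
    obtain ⟨w, hw⟩ := c.exists_rep
    refine ⟨F.degree w, ?_⟩
    intro v hv
    have hreach : F.Reachable v w := by
      rw [← SimpleGraph.ConnectedComponent.eq]
      rw [SimpleGraph.ConnectedComponent.mem_supp_iff] at hv
      rw [hv, ← hw]; rfl
    have key : ∀ a b, F.Walk a b → F.degree a = F.degree b := by
      intro a b p
      induction p with
      | nil => rfl
      | cons h q ih => rw [← ih, hdF, hs _ _ h, ← hdF]
    obtain ⟨p⟩ := hreach
    exact key _ _ p
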